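/- OSSS inequality for monotonic measures (Duminil-Copin–Raoufi–Tassion): Let μ be a monotonic probability measure on {0,1}^n with 0 < μ[ω_i = 1] < 1 for every i, let f : {0,1}^n → {0,1} be an increasing boolean function, and let T be any algorithm (decision tree) on {0,1}^n. Then Var_μ(f) ≤ Σ_{i=1}^n δ_i(T) · Inf_i^μ(f), where δ_i(T) := μ[∃ t ≤ τ(ω) : i_t(ω) = i] is the revealment of coordinate i under μ. -/

import Mathlib

open scoped Classical

section MonotonicMeasures

variable {ι : Type*} [Fintype ι] [DecidableEq ι]

/-- A probability measure `μ` on the finite set `{0,1}^ι`, given by its weight function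
`w`: all weights are nonnegative and they sum to `1`. -/
def IsProbWeight (w : (ι → Bool) → ℝ) : Prop :=
  (∀ ω, 0 ≤ w ω) ∧ ∑ ω : ι → Bool, w ω = 1

/-- The probability `μ[A]` of an event `A ⊆ {0,1}^ι` under the measure with weights `w`. -/
noncomputable def wProb (w : (ι → Bool) → ℝ) (A : (ι → Bool) → Prop) : ℝ :=
  ∑ ω : ι → Bool, w ω * (if A ω then 1 else 0)

/-- The expectation `μ[g]` of `g : {0,1}^ι → ℝ` under the measure with weights `w`. -/
noncomputable def wExp (w : (ι → Bool) → ℝ) (g : (ι → Bool) → ℝ) : ℝ :=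
  ∑ ω : ι → Bool, w ω * g ω

/-- The variance `Var_μ(g)` of `g : {0,1}^ι → ℝ` under the measure with weights `w`. -/
noncomputable def wVar (w : (ι → Bool) → ℝ) (g : (ι → Bool) → ℝ) : ℝ :=
  wExp w (fun ω => (g ω - wExp w g) ^ 2)

/-- The `{0,1}`-valued (real) indicator of a boolean function. -/
noncomputable def boolInd (f : (ι → Bool) → Bool) (ω : ι → Bool) : ℝ :=
  if f ω then 1 else 0

/-- The real-valued coordinate function `ω ↦ ω_i`. -/
noncomputable def coordFun (i : ι) (ω : ι → Bool) : ℝ := if ω i then 1 else 0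

/-- The cylinder event `{ω : ω_i = ξ_i for all i ∈ F}`. -/
def agreesOn (F : Finset ι) (ξ : ι → Bool) (ω : ι → Bool) : Prop :=
  ∀ i ∈ F, ω i = ξ i

/-- A measure `μ` (with weights `w`) on `{0,1}^ι` is monotonic if, for every coordinate
`e`, every `F ⊆ ι` and all `ξ ≤ ζ` in `{0,1}^F` whose cylinders have positive
probability, `μ[ω_e = 1 | ω ≡ ξ on F] ≤ μ[ω_e = 1 | ω ≡ ζ on F]`. -/
def IsMonotonic (w : (ι → Bool) → ℝ) : Prop :=
  ∀ (e : ι) (F : Finset ι) (ξ ζ : ι → Bool), (∀ i ∈ F, ξ i ≤ ζ i) →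
    0 < wProb w (agreesOn F ξ) → 0 < wProb w (agreesOn F ζ) →
    wProb w (fun ω => ω e = true ∧ agreesOn F ξ ω) / wProb w (agreesOn F ξ) ≤
      wProb w (fun ω => ω e = true ∧ agreesOn F ζ ω) / wProb w (agreesOn F ζ)

/-- The conditional influence `Inf_i^μ(f) := μ[f | ω_i = 1] − μ[f | ω_i = 0]`. -/
noncomputable def condInfluence (w : (ι → Bool) → ℝ) (f : (ι → Bool) → Bool) (i : ι) : ℝ :=
  wProb w (fun ω => f ω = true ∧ ω i = true) / wProb w (fun ω => ω i = true) -
    wProb w (fun ω => f ω = true ∧ ω i = false) / wProb w (fun ω => ω i = false)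

/-- A boolean function is increasing if it is monotone w.r.t. the coordinatewise
partial order on `{0,1}^ι` (with `false ≤ true`). -/
def IncreasingBoolFun (f : (ι → Bool) → Bool) : Prop :=
  ∀ ω ω' : ι → Bool, (∀ i, ω i ≤ ω' i) → f ω ≤ f ω'

end MonotonicMeasures


section DecisionTree

variable {ι : Type*} [Fintype ι] [DecidableEq ι]

/-- The history (queried coordinates together with the revealed values) after `t` steps of
the algorithm with decision rule `ψ` run on the input `ω`.  The decision rule `ψ` gives the
next queried coordinate as a function of the history so far (`ψ [] = i₁` is the first,
deterministic, query). -/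
def algHistory (ψ : List (ι × Bool) → ι) (ω : ι → Bool) : ℕ → List (ι × Bool)
  | 0 => []
  | t + 1 =>
    algHistory ψ ω t ++ [(ψ (algHistory ψ ω t), ω (ψ (algHistory ψ ω t)))]

/-- `algQuery ψ ω t` is the `(t+1)`-st coordinate queried by the algorithm on input `ω`
(indexed from `t = 0`). -/
def algQuery (ψ : List (ι × Bool) → ι) (ω : ι → Bool) (t : ℕ) : ι :=
  ψ (algHistory ψ ω t)

/-- Validity of a decision rule: on any input, the queried coordinates
`i_1(ω), …, i_n(ω)` are pairwise distinct (so they enumerate all of `ι`). -/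
def IsDecisionTree (ψ : List (ι × Bool) → ι) : Prop :=
  ∀ ω : ι → Bool, ∀ s t : ℕ, s < t → t < Fintype.card ι → algQuery ψ ω s ≠ algQuery ψ ω t

/-- The stopping time `τ(ω)`: the least `t ≥ 1` such that the values revealed during the
first `t` queries determine the value `f(ω)`. -/
noncomputable def algStoppingTime (f : (ι → Bool) → Bool) (ψ : List (ι × Bool) → ι)
    (ω : ι → Bool) : ℕ :=
  sInf {t : ℕ | 1 ≤ t ∧ ∀ x : ι → Bool,
    (∀ s < t, x (algQuery ψ ω s) = ω (algQuery ψ ω s)) → f x = f ω}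

/-- The revealment `δ_i(T) := μ[∃ t ≤ τ(ω), i_t(ω) = i]`: the probability (under the
measure with weights `w`) that coordinate `i` is queried before the algorithm
determines `f`. -/
noncomputable def wRevealment (w : (ι → Bool) → ℝ) (f : (ι → Bool) → Bool)
    (ψ : List (ι × Bool) → ι) (i : ι) : ℝ :=
  wProb w (fun ω => ∃ t < algStoppingTime f ψ ω, algQuery ψ ω t = i)

end DecisionTree

/-!
Two configurations `X`, `Y` of law `μ` are sampled in the order in which the tree queries `X`, each
coordinate from its conditional probability given its own past, using one uniform variable for
both. Started from equal pasts, `X = Y` and `E[g(X) f(Y)] = μ[g f]`. Started from a past of `X`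
that determines `g` and an independent past of `Y`, it is `μ[g] μ[f]` after averaging. One passes
from the first situation to the second by sampling the queried coordinates independently, one more
at a time, until `g(X)` is known. Monotonicity of the conditional probabilities makes the coupling
monotone, so that `f` increasing bounds the change caused by the query `e` by the mean of the
conditional covariance `μ[f ; ω_e | past of Y]`; by the FKG inequality this mean is at most
`Cov(f, ω_e)`. Hence `Cov(g, f) ≤ Σ_i δ_i Cov(f, ω_i)`, and
`Cov(f, ω_i) = μ[ω_i = 1] (1 - μ[ω_i = 1]) Inf_i(f)`.
-/

open Function

section Expectation

lemma boolInd_mem_Icc {ι : Type*} (f : (ι → Bool) → Bool) (ω : ι → Bool) :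
    boolInd f ω ∈ Set.Icc (0 : ℝ) 1 := by
  unfold boolInd
  split_ifs <;> simp

lemma IncreasingBoolFun.monotone_boolInd {ι : Type*} {f : (ι → Bool) → Bool}
    (hf : IncreasingBoolFun f) : Monotone (boolInd f) := by
  intro ω ω' hω
  have hle : f ω = true → f ω' = true := hf ω ω' hω
  unfold boolInd
  split_ifs <;> simp_all

lemma coordFun_mem_Icc {ι : Type*} (e : ι) (ω : ι → Bool) :
    coordFun e ω ∈ Set.Icc (0 : ℝ) 1 :=
  boolInd_mem_Icc (fun ω => ω e) ω

lemma coordFun_monotone {ι : Type*} (e : ι) : Monotone (coordFun e) :=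
  IncreasingBoolFun.monotone_boolInd (f := fun ω => ω e) fun _ _ h => h e

variable {ι : Type*} [Fintype ι] [DecidableEq ι] {w : (ι → Bool) → ℝ}

lemma wExp_add (w g h : (ι → Bool) → ℝ) :
    wExp w (fun ω => g ω + h ω) = wExp w g + wExp w h := by
  simp only [wExp, mul_add, Finset.sum_add_distrib]

lemma wExp_sub (w g h : (ι → Bool) → ℝ) :
    wExp w (fun ω => g ω - h ω) = wExp w g - wExp w h := by
  simp only [wExp, mul_sub, Finset.sum_sub_distrib]

lemma wExp_const_mul (w : (ι → Bool) → ℝ) (c : ℝ) (g : (ι → Bool) → ℝ) :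
    wExp w (fun ω => c * g ω) = c * wExp w g := by
  simp only [wExp, Finset.mul_sum, mul_left_comm]

lemma wExp_sum {κ : Type*} [Fintype κ] (w : (ι → Bool) → ℝ) (g : κ → (ι → Bool) → ℝ) :
    wExp w (fun ω => ∑ a, g a ω) = ∑ a, wExp w (g a) := by
  simp only [wExp, Finset.mul_sum]
  exact Finset.sum_comm

lemma wExp_mono (hw : 0 ≤ w) {g h : (ι → Bool) → ℝ} (hgh : g ≤ h) : wExp w g ≤ wExp w h :=
  Finset.sum_le_sum fun ω _ => mul_le_mul_of_nonneg_left (hgh ω) (hw ω)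

lemma IsProbWeight.wExp_const (hw : IsProbWeight w) (c : ℝ) : wExp w (fun _ => c) = c := by
  rw [wExp, ← Finset.sum_mul, hw.2, one_mul]

lemma wProb_eq_wExp (w : (ι → Bool) → ℝ) (A : (ι → Bool) → Prop) [DecidablePred A] :
    wProb w A = wExp w (fun ω => if A ω then 1 else 0) := by
  unfold wProb wExp
  congr!

lemma wProb_nonneg (hw : 0 ≤ w) (A : (ι → Bool) → Prop) : 0 ≤ wProb w A :=
  Finset.sum_nonneg fun ω _ => mul_nonneg (hw ω) (by split_ifs <;> norm_num)

/-- The covariance `Cov_μ(g, h)` under the measure with weights `w`. -/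
noncomputable def wCov (w g h : (ι → Bool) → ℝ) : ℝ :=
  wExp w (fun ω => g ω * h ω) - wExp w g * wExp w h

lemma IsProbWeight.wVar_eq_wCov_self (hw : IsProbWeight w) (g : (ι → Bool) → ℝ) :
    wVar w g = wCov w g g := by
  have expand_square : ∀ ω, (g ω - wExp w g) ^ 2
      = g ω * g ω - 2 * wExp w g * g ω + wExp w g ^ 2 := fun ω => by ring
  simp only [wVar, expand_square]
  rw [wExp_add, wExp_sub, wExp_const_mul, hw.wExp_const, wCov]
  ring

end Expectation

section Cylinder

lemma dependsOn_coe_univ {ι β : Type*} [Fintype ι] (G : (ι → Bool) → β) :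
    DependsOn G (Finset.univ : Finset ι) := by
  simpa only [Finset.coe_univ] using dependsOn_univ G

lemma agreesOn_piecewise {ι : Type*} [DecidableEq ι] (F : Finset ι) (η ζ : ι → Bool) :
    agreesOn F (F.piecewise η ζ) = agreesOn F η := by
  funext ω
  exact propext (forall₂_congr fun i hi => by rw [Finset.piecewise_eq_of_mem _ _ _ hi])

variable {ι : Type*} [DecidableEq ι] {F : Finset ι} {e : ι}

lemma agreesOn_insert_update (he : e ∉ F) (ξ ω : ι → Bool) (b : Bool) :
    agreesOn (insert e F) (update ξ e b) ω ↔ ω e = b ∧ agreesOn F ξ ω := by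
  simp only [agreesOn, Finset.forall_mem_insert, update_self]
  refine and_congr_right fun _ => forall₂_congr fun i hi => ?_
  rw [update_of_ne (ne_of_mem_of_not_mem hi he)]

lemma dependsOn_comp_update_of_insert {β : Type*} {G : (ι → Bool) → β}
    (hG : DependsOn G (insert e F : Finset ι)) (b : Bool) :
    DependsOn (fun η => G (update η e b)) F := by
  intro η η' h
  refine hG fun i hi => ?_
  obtain rfl | hie := eq_or_ne i e
  · rw [update_self, update_self]
  · rw [update_of_ne hie, update_of_ne hie]
    exact h i ((Finset.mem_insert.1 hi).resolve_left hie)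

variable [Fintype ι] {w : (ι → Bool) → ℝ}

/-- The expectation `μ[G ; ω ≡ ξ on F]` of `G` restricted to a cylinder; dividing it by the
probability of the cylinder gives the conditional expectation. -/
noncomputable def cylExp (w : (ι → Bool) → ℝ) (F : Finset ι) (ξ : ι → Bool)
    (G : (ι → Bool) → ℝ) : ℝ :=
  wExp w (fun ω => if agreesOn F ξ ω then G ω else 0)

lemma cylExp_congr (w : (ι → Bool) → ℝ) {ξ : ι → Bool} {G H : (ι → Bool) → ℝ}
    (h : ∀ ω, agreesOn F ξ ω → G ω = H ω) : cylExp w F ξ G = cylExp w F ξ H := by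
  unfold cylExp
  congr 1 with ω
  split_ifs with hω
  exacts [h ω hω, rfl]

lemma cylExp_mono (hw : 0 ≤ w) {G H : (ι → Bool) → ℝ} (h : G ≤ H) (ξ : ι → Bool) :
    cylExp w F ξ G ≤ cylExp w F ξ H :=
  wExp_mono hw fun ω => by
    dsimp only
    split_ifs
    exacts [h ω, le_rfl]

lemma cylExp_add (w : (ι → Bool) → ℝ) (ξ : ι → Bool) (G H : (ι → Bool) → ℝ) :
    cylExp w F ξ (fun ω => G ω + H ω) = cylExp w F ξ G + cylExp w F ξ H := by
  unfold cylExp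
  rw [← wExp_add]
  congr 1 with ω
  split_ifs <;> simp

lemma cylExp_dependsOn_mul (w : (ι → Bool) → ℝ) {A : (ι → Bool) → ℝ} (hA : DependsOn A F)
    (ξ : ι → Bool) (G : (ι → Bool) → ℝ) :
    cylExp w F ξ (fun ω => A ω * G ω) = A ξ * cylExp w F ξ G := by
  unfold cylExp
  rw [← wExp_const_mul]
  congr 1 with ω
  split_ifs with hω
  · exact congrArg (· * G ω) (hA hω)
  · rw [mul_zero]

lemma cylExp_of_dependsOn (w : (ι → Bool) → ℝ) {A : (ι → Bool) → ℝ} (hA : DependsOn A F)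
    (ξ : ι → Bool) : cylExp w F ξ A = A ξ * wProb w (agreesOn F ξ) := by
  have hmul := cylExp_dependsOn_mul w hA ξ fun _ => 1
  simp only [mul_one] at hmul
  exact hmul

lemma cylExp_const (w : (ι → Bool) → ℝ) (F : Finset ι) (ξ : ι → Bool) (c : ℝ) :
    cylExp w F ξ (fun _ => c) = c * wProb w (agreesOn F ξ) :=
  cylExp_of_dependsOn w (A := fun _ => c) (fun _ _ _ => rfl) ξ

lemma cylExp_empty (w : (ι → Bool) → ℝ) (ξ : ι → Bool) (G : (ι → Bool) → ℝ) :
    cylExp w ∅ ξ G = wExp w G := by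
  simp [cylExp, agreesOn]

lemma cylExp_coordFun (w : (ι → Bool) → ℝ) (F : Finset ι) (ξ : ι → Bool) (e : ι) :
    cylExp w F ξ (coordFun e) = wProb w (fun ω => ω e = true ∧ agreesOn F ξ ω) := by
  unfold cylExp wProb wExp coordFun
  refine Finset.sum_congr rfl fun ω _ => ?_
  by_cases hω : agreesOn F ξ ω <;> simp [hω]

lemma cylExp_eq_sum_insert_update (w : (ι → Bool) → ℝ) (he : e ∉ F) (ξ : ι → Bool)
    (G : (ι → Bool) → ℝ) :
    cylExp w F ξ G = ∑ b, cylExp w (insert e F) (update ξ e b) G := by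
  unfold cylExp
  rw [← wExp_sum]
  congr 1 with ω
  simp only [agreesOn_insert_update he]
  cases ω e <;> simp

lemma wExp_eq_of_cylExp_eq {G H : (ι → Bool) → ℝ} (F : Finset ι)
    (h : ∀ ξ, cylExp w F ξ G = cylExp w F ξ H) : wExp w G = wExp w H := by
  induction F using Finset.induction_on with
  | empty => simpa only [cylExp_empty] using h fun _ => false
  | insert e F he ih =>
    refine ih fun ξ => ?_
    simp only [cylExp_eq_sum_insert_update w he ξ, h]

/-- `M` is a version of the conditional expectation `μ[f | ω_i, i ∈ F]`. Null cylinders put no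
constraint on its values. -/
structure IsCondExpOn (w : (ι → Bool) → ℝ) (F : Finset ι) (f M : (ι → Bool) → ℝ) : Prop where
  dependsOn : DependsOn M F
  mul_wProb : ∀ η, M η * wProb w (agreesOn F η) = cylExp w F η f

lemma isCondExpOn_self {f : (ι → Bool) → ℝ} (hf : DependsOn f F) : IsCondExpOn w F f f :=
  ⟨hf, fun η => (cylExp_of_dependsOn w hf η).symm⟩

lemma IsCondExpOn.wExp_eq {f M : (ι → Bool) → ℝ} (hM : IsCondExpOn w F f M) :
    wExp w M = wExp w f :=
  wExp_eq_of_cylExp_eq F fun ξ => by rw [cylExp_of_dependsOn w hM.dependsOn, hM.mul_wProb]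

lemma IsCondExpOn.dependsOn_mul {A f M : (ι → Bool) → ℝ} (hM : IsCondExpOn w F f M)
    (hA : DependsOn A F) : IsCondExpOn w F (fun ω => A ω * f ω) (fun η => A η * M η) where
  dependsOn _ _ h := congrArg₂ (· * ·) (hA h) (hM.dependsOn h)
  mul_wProb η := by rw [cylExp_dependsOn_mul w hA, mul_assoc, hM.mul_wProb]

end Cylinder

section MonotoneKernel

lemma exists_monotone_extension_Icc {α β : Type*} [Preorder α]
    [ConditionallyCompleteLattice β] {r : α → β} {s : Set α} {a b : β} (hab : a ≤ b)
    (hr : MonotoneOn r s) (hr_mem : ∀ x ∈ s, r x ∈ Set.Icc a b) :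
    ∃ g : α → β, Monotone g ∧ (∀ x, g x ∈ Set.Icc a b) ∧ Set.EqOn g r s := by
  have hbdd : ∀ x, b ∈ upperBounds (insert a (r '' {y ∈ s | y ≤ x})) := fun x =>
    Set.forall_mem_insert.2 ⟨hab, Set.forall_mem_image.2 fun y hy => (hr_mem y hy.1).2⟩
  refine ⟨fun x => sSup (insert a (r '' {y ∈ s | y ≤ x})), fun x x' hx => ?_, fun x => ?_,
    fun x hx => ?_⟩
  · exact csSup_le_csSup ⟨b, hbdd x'⟩ (Set.insert_nonempty _ _)
      (Set.insert_subset_insert (Set.image_mono fun y hy => ⟨hy.1, hy.2.trans hx⟩))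
  · exact ⟨le_csSup ⟨b, hbdd x⟩ (Set.mem_insert _ _),
      csSup_le (Set.insert_nonempty _ _) (hbdd x)⟩
  · refine le_antisymm (csSup_le (Set.insert_nonempty _ _) ?_)
      (le_csSup ⟨b, hbdd x⟩ (Set.mem_insert_of_mem _ ⟨x, ⟨hx, le_rfl⟩, rfl⟩))
    exact Set.forall_mem_insert.2 ⟨(hr_mem x hx).1,
      Set.forall_mem_image.2 fun y hy => hr hy.1 hx hy.2⟩

/-- The weights of the Bernoulli distribution of parameter `p` on `{0,1}`. -/
def bernoulliWeight (p : ℝ) (b : Bool) : ℝ := if b then p else 1 - p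

/-- The operator replacing coordinate `e` by a Bernoulli variable of parameter `q η` and
averaging. For `q = μ[ω_e = 1 | ω_F]` it maps `μ[f | ω_F, ω_e]` to `μ[f | ω_F]`. -/
def resample {ι : Type*} [DecidableEq ι] (q : (ι → Bool) → ℝ) (e : ι)
    (G : (ι → Bool) → ℝ) (η : ι → Bool) : ℝ :=
  ∑ b, bernoulliWeight (q η) b * G (update η e b)

section Resample

variable {ι : Type*} [DecidableEq ι] {m q G H : (ι → Bool) → ℝ}

lemma resample_apply (q : (ι → Bool) → ℝ) (e : ι) (G : (ι → Bool) → ℝ) (η : ι → Bool) :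
    resample q e G η = q η * G (update η e true) + (1 - q η) * G (update η e false) := by
  simp [resample, bernoulliWeight]

lemma le_update_true_of_monotone (hG : Monotone G) (e : ι) (η : ι → Bool) :
    G (update η e false) ≤ G (update η e true) :=
  hG (update_le_update_iff.2 ⟨Bool.false_le _, fun _ _ => le_rfl⟩)

lemma monotone_mix_update {c : ℝ} (hm : Monotone m) (hm_mem : ∀ η, m η ∈ Set.Icc 0 c)
    (hG : Monotone G) (e : ι) :
    Monotone fun η => m η * G (update η e true) + (c - m η) * G (update η e false) := by
  intro η η' h
  have hupdate : ∀ b, G (update η e b) ≤ G (update η' e b) := fun b =>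
    hG (update_le_update_iff.2 ⟨le_rfl, fun i _ => h i⟩)
  have hflip := le_update_true_of_monotone hG e η'
  calc m η * G (update η e true) + (c - m η) * G (update η e false)
      ≤ m η * G (update η' e true) + (c - m η) * G (update η' e false) :=
        add_le_add (mul_le_mul_of_nonneg_left (hupdate _) (hm_mem η).1)
          (mul_le_mul_of_nonneg_left (hupdate _) (sub_nonneg.2 (hm_mem η).2))
    _ ≤ m η' * G (update η' e true) + (c - m η') * G (update η' e false) := by
        linarith [mul_nonneg (sub_nonneg.2 (hm h)) (sub_nonneg.2 hflip)]

lemma monotone_resample (hq : Monotone q) (hq_mem : ∀ η, q η ∈ Set.Icc (0 : ℝ) 1)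
    (hG : Monotone G) (e : ι) : Monotone (resample q e G) := by
  simpa only [← resample_apply] using monotone_mix_update hq hq_mem hG e

lemma dependsOn_resample {F : Finset ι} {e : ι} (hq : DependsOn q F)
    (hG : DependsOn G (insert e F : Finset ι)) : DependsOn (resample q e G) F := by
  intro η η' h
  have hupdate := fun b => dependsOn_comp_update_of_insert hG b h
  simp only [resample, hq h, hupdate]

-- Chebyshev's association inequality on the two-point space `{0,1}`.
lemma resample_mul_resample_le (hq_mem : ∀ η, q η ∈ Set.Icc (0 : ℝ) 1) (hG : Monotone G)
    (hH : Monotone H) (e : ι) (η : ι → Bool) :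
    resample q e G η * resample q e H η ≤ resample q e (fun ω => G ω * H ω) η := by
  have hG_flip := sub_nonneg.2 (le_update_true_of_monotone hG e η)
  have hH_flip := sub_nonneg.2 (le_update_true_of_monotone hH e η)
  have hq_var := mul_nonneg (hq_mem η).1 (sub_nonneg.2 (hq_mem η).2)
  simp only [resample_apply]
  linarith [mul_nonneg hq_var (mul_nonneg hG_flip hH_flip)]

end Resample

variable {ι : Type*} [Fintype ι] [DecidableEq ι] {w : (ι → Bool) → ℝ}

/-- `Q F e η` is a version of the conditional probability `μ[ω_e = 1 | ω ≡ η on F]` which is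
increasing in `η`, including across cylinders of probability zero. -/
structure IsMonotoneKernel (w : (ι → Bool) → ℝ) (Q : Finset ι → ι → (ι → Bool) → ℝ) :
    Prop where
  isCondExpOn : ∀ F e, IsCondExpOn w F (coordFun e) (Q F e)
  monotone : ∀ F e, Monotone (Q F e)
  mem_Icc : ∀ F e η, Q F e η ∈ Set.Icc (0 : ℝ) 1

lemma cylExp_coordFun_mem_Icc (hw : 0 ≤ w) (F : Finset ι) (e : ι) (η : ι → Bool) :
    cylExp w F η (coordFun e) ∈ Set.Icc 0 (wProb w (agreesOn F η)) := by
  constructor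
  · simpa only [cylExp_const, zero_mul] using
      cylExp_mono hw (G := fun _ => 0) (fun ω => (coordFun_mem_Icc e ω).1) η
  · simpa only [cylExp_const, one_mul] using
      cylExp_mono hw (H := fun _ => 1) (fun ω => (coordFun_mem_Icc e ω).2) η

lemma IsMonotonic.monotoneOn_condProb (hm : IsMonotonic w) (F : Finset ι) (e : ι) :
    MonotoneOn (fun η => cylExp w F η (coordFun e) / wProb w (agreesOn F η))
      {η | 0 < wProb w (agreesOn F η)} := by
  intro ξ hξ ζ hζ hle
  simpa only [cylExp_coordFun] using hm e F ξ ζ (fun i _ => hle i) hξ hζ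

lemma IsMonotonic.exists_monotone_isCondExpOn_coordFun (hm : IsMonotonic w) (hw : 0 ≤ w)
    (F : Finset ι) (e : ι) :
    ∃ q : (ι → Bool) → ℝ, IsCondExpOn w F (coordFun e) q ∧ Monotone q ∧
      ∀ η, q η ∈ Set.Icc (0 : ℝ) 1 := by
  have hmem := cylExp_coordFun_mem_Icc hw F e
  obtain ⟨g, hg_mono, hg_mem, hg_eq⟩ := exists_monotone_extension_Icc zero_le_one
    (hm.monotoneOn_condProb F e) fun η _ => ⟨div_nonneg (hmem η).1 (wProb_nonneg hw _),
      div_le_one_of_le₀ (hmem η).2 (wProb_nonneg hw _)⟩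
  -- Composing with `F.piecewise · ⊥` makes the extension a function of the coordinates in `F`.
  refine ⟨fun η => g (F.piecewise η ⊥), ⟨fun η η' h => ?_, fun η => ?_⟩, fun η η' h => ?_,
    fun η => hg_mem _⟩
  · exact congrArg g (F.piecewise_congr h fun _ _ => rfl)
  · rcases (wProb_nonneg hw (agreesOn F η)).eq_or_lt with hnull | hpos
    · have hzero := hmem η
      rw [← hnull] at hzero ⊢
      rw [mul_zero, le_antisymm hzero.2 hzero.1]
    · have hg_cond := hg_eq (x := F.piecewise η ⊥) (by rwa [Set.mem_ofPred, agreesOn_piecewise])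
      simp only [cylExp, agreesOn_piecewise] at hg_cond
      rw [hg_cond, div_mul_cancel₀ _ hpos.ne', cylExp]
  · exact hg_mono (Finset.piecewise_le_piecewise _ h le_rfl)

lemma IsMonotonic.exists_isMonotoneKernel (hm : IsMonotonic w) (hw : 0 ≤ w) :
    ∃ Q, IsMonotoneKernel w Q := by
  choose Q hcond hmono hmem using hm.exists_monotone_isCondExpOn_coordFun hw
  exact ⟨Q, hcond, hmono, hmem⟩

namespace IsMonotoneKernel

variable {Q : Finset ι → ι → (ι → Bool) → ℝ} {F : Finset ι} {e : ι}

lemma wProb_insert_update (hQ : IsMonotoneKernel w Q) (he : e ∉ F) (η : ι → Bool) (b : Bool) :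
    wProb w (agreesOn (insert e F) (update η e b))
      = bernoulliWeight (Q F e η) b * wProb w (agreesOn F η) := by
  have htrue : wProb w (agreesOn (insert e F) (update η e true))
      = Q F e η * wProb w (agreesOn F η) := by
    rw [(hQ.isCondExpOn F e).mul_wProb, cylExp_coordFun]
    exact congrArg (wProb w) (funext fun ω => propext (agreesOn_insert_update he η ω true))
  cases b
  · have hsplit := cylExp_eq_sum_insert_update w he η fun _ => 1
    simp only [cylExp_const, one_mul, Fintype.sum_bool, htrue] at hsplit
    simp only [bernoulliWeight, Bool.false_eq_true, if_false]
    linarith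
  · simpa only [bernoulliWeight, if_true] using htrue

lemma isCondExpOn_resample (hQ : IsMonotoneKernel w Q) (he : e ∉ F) {f M : (ι → Bool) → ℝ}
    (hM : IsCondExpOn w (insert e F) f M) : IsCondExpOn w F f (resample (Q F e) e M) where
  dependsOn := dependsOn_resample (hQ.isCondExpOn F e).dependsOn hM.dependsOn
  mul_wProb η := by
    rw [cylExp_eq_sum_insert_update w he, resample, Finset.sum_mul]
    refine Finset.sum_congr rfl fun b _ => ?_
    rw [← hM.mul_wProb, hQ.wProb_insert_update he]
    ring

lemma wExp_resample (hQ : IsMonotoneKernel w Q) (he : e ∉ F) {G : (ι → Bool) → ℝ}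
    (hG : DependsOn G (insert e F : Finset ι)) : wExp w (resample (Q F e) e G) = wExp w G :=
  (hQ.isCondExpOn_resample he (isCondExpOn_self hG)).wExp_eq

-- Two versions of `μ[f | ω_F, ω_e]` differ at `ω_e = b` only if `ω_F` is null or rules out `b`.
lemma mul_mul_wProb_eq_of_isCondExpOn (hQ : IsMonotoneKernel w Q) (he : e ∉ F)
    {f M N : (ι → Bool) → ℝ} (hM : IsCondExpOn w (insert e F) f M)
    (hN : IsCondExpOn w (insert e F) f N) (η : ι → Bool) {b : Bool} {c : ℝ}
    (hc : c ∈ Set.Icc 0 (bernoulliWeight (Q F e η) b)) :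
    c * M (update η e b) * wProb w (agreesOn F η)
      = c * N (update η e b) * wProb w (agreesOn F η) := by
  have hcyl := (hM.mul_wProb (update η e b)).trans (hN.mul_wProb (update η e b)).symm
  rw [hQ.wProb_insert_update he, mul_left_comm, mul_left_comm (N _)] at hcyl
  rw [mul_assoc, mul_assoc]
  rcases mul_eq_mul_left_iff.1 hcyl with heq | hzero
  · rw [heq]
  · rw [le_antisymm (hzero ▸ hc.2) hc.1, zero_mul, zero_mul]

lemma wExp_mul_wExp_le_of_dependsOn (hQ : IsMonotoneKernel w Q) (hw : IsProbWeight w)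
    (F : Finset ι) {G H : (ι → Bool) → ℝ} (hG : Monotone G) (hH : Monotone H)
    (hGF : DependsOn G F) (hHF : DependsOn H F) :
    wExp w G * wExp w H ≤ wExp w (fun ω => G ω * H ω) := by
  induction F using Finset.induction_on generalizing G H with
  | empty =>
    have hG_const : G = fun _ => G ⊥ := funext fun ω => hGF (by simp)
    have hH_const : H = fun _ => H ⊥ := funext fun ω => hHF (by simp)
    rw [hG_const, hH_const, hw.wExp_const, hw.wExp_const, hw.wExp_const]
  | insert e F he ih =>
    have hGHF : DependsOn (fun ω => G ω * H ω) (insert e F : Finset ι) := fun _ _ h =>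
      congrArg₂ (· * ·) (hGF h) (hHF h)
    have hqF := (hQ.isCondExpOn F e).dependsOn
    calc wExp w G * wExp w H
        = wExp w (resample (Q F e) e G) * wExp w (resample (Q F e) e H) := by
          rw [hQ.wExp_resample he hGF, hQ.wExp_resample he hHF]
      _ ≤ wExp w (fun η => resample (Q F e) e G η * resample (Q F e) e H η) :=
          ih (monotone_resample (hQ.monotone F e) (hQ.mem_Icc F e) hG e)
            (monotone_resample (hQ.monotone F e) (hQ.mem_Icc F e) hH e)
            (dependsOn_resample hqF hGF) (dependsOn_resample hqF hHF)
      _ ≤ wExp w (resample (Q F e) e fun ω => G ω * H ω) :=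
          wExp_mono hw.1 (resample_mul_resample_le (hQ.mem_Icc F e) hG hH e)
      _ = wExp w (fun ω => G ω * H ω) := hQ.wExp_resample he hGHF

lemma wCov_nonneg (hQ : IsMonotoneKernel w Q) (hw : IsProbWeight w) {G H : (ι → Bool) → ℝ}
    (hG : Monotone G) (hH : Monotone H) : 0 ≤ wCov w G H :=
  sub_nonneg.2 (hQ.wExp_mul_wExp_le_of_dependsOn hw Finset.univ hG hH (dependsOn_coe_univ G)
    (dependsOn_coe_univ H))

lemma isCondExpOn_coordFun_sub_mul (hQ : IsMonotoneKernel w Q) (he : e ∉ F)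
    {f M : (ι → Bool) → ℝ} (hM : IsCondExpOn w (insert e F) f M) :
    IsCondExpOn w F (fun ω => (coordFun e ω - Q F e ω) * f ω)
      (fun η => Q F e η * (1 - Q F e η) * (M (update η e true) - M (update η e false))) := by
  have hqF := (hQ.isCondExpOn F e).dependsOn
  have hcoord : DependsOn (fun ω => coordFun e ω - Q F e ω) (insert e F : Finset ι) :=
    fun η η' h => by
      simp only [coordFun, h e (Finset.mem_insert_self e F),
        hqF fun i hi => h i (Finset.mem_insert_of_mem hi)]
  convert hQ.isCondExpOn_resample he (hM.dependsOn_mul hcoord) using 1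
  funext η
  have hq_update : ∀ b, Q F e (update η e b) = Q F e η := fun b =>
    hqF fun i hi => update_of_ne (ne_of_mem_of_not_mem hi he) _ _
  simp only [resample_apply, coordFun, hq_update, update_self, if_true, Bool.false_eq_true,
    if_false]
  ring

lemma wExp_condCov_le_wCov (hQ : IsMonotoneKernel w Q) (hw : IsProbWeight w) (he : e ∉ F)
    {f M : (ι → Bool) → ℝ} (hf : Monotone f) (hM : IsCondExpOn w (insert e F) f M) :
    wExp w (fun η => Q F e η * (1 - Q F e η) * (M (update η e true) - M (update η e false)))
      ≤ wCov w f (coordFun e) := by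
  have hfkg := hQ.wCov_nonneg hw hf (hQ.monotone F e)
  rw [wCov, (hQ.isCondExpOn F e).wExp_eq] at hfkg
  rw [(hQ.isCondExpOn_coordFun_sub_mul he hM).wExp_eq, wCov]
  simp only [mul_comm _ (f _), mul_sub, wExp_sub]
  linarith

end IsMonotoneKernel

end MonotoneKernel

section Coupling

/-- The joint weights of `(1[U ≤ p], 1[U ≤ q])` for `U` uniform on `[0,1]`, with
`p, q ∈ [0,1]`. -/
noncomputable def monotoneCoupling (p q : ℝ) : Bool → Bool → ℝ
  | true, true => min p q
  | true, false => p - min p q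
  | false, true => q - min p q
  | false, false => 1 - max p q

variable {p q : ℝ}

lemma sum_monotoneCoupling_right (p q : ℝ) (a : Bool) :
    ∑ b, monotoneCoupling p q a b = bernoulliWeight p a := by
  have := min_add_max p q
  cases a <;> simp only [monotoneCoupling, bernoulliWeight, Fintype.sum_bool, if_true,
    Bool.false_eq_true, if_false] <;> linarith

lemma sum_monotoneCoupling_left (p q : ℝ) (b : Bool) :
    ∑ a, monotoneCoupling p q a b = bernoulliWeight q b := by
  have := min_add_max p q
  cases b <;> simp only [monotoneCoupling, bernoulliWeight, Fintype.sum_bool, if_true,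
    Bool.false_eq_true, if_false] <;> linarith

lemma monotoneCoupling_nonneg (hp : p ∈ Set.Icc (0 : ℝ) 1) (hq : q ∈ Set.Icc (0 : ℝ) 1)
    (a b : Bool) : 0 ≤ monotoneCoupling p q a b := by
  cases a <;> cases b <;> simp [monotoneCoupling, hp.1, hp.2, hq.1, hq.2]

lemma monotoneCoupling_mem_Icc (hp : p ∈ Set.Icc (0 : ℝ) 1) (hq : q ∈ Set.Icc (0 : ℝ) 1)
    (a b : Bool) : monotoneCoupling p q a b ∈ Set.Icc 0 (bernoulliWeight q b) :=
  ⟨monotoneCoupling_nonneg hp hq a b, sum_monotoneCoupling_left p q b ▸ Finset.single_le_sum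
    (fun a _ => monotoneCoupling_nonneg hp hq a b) (Finset.mem_univ a)⟩

lemma monotoneCoupling_false_right (p q : ℝ) (a : Bool) :
    monotoneCoupling p q a false = bernoulliWeight p a - monotoneCoupling p q a true := by
  rw [← sum_monotoneCoupling_right p q, Fintype.sum_bool, add_sub_cancel_left]

lemma monotone_monotoneCoupling_true (p : ℝ) (a : Bool) :
    Monotone fun q => monotoneCoupling p q a true := by
  intro q q' h
  rcases le_total p q with hp | hp <;> rcases le_total p q' with hp' | hp' <;>
    cases a <;> simp only [monotoneCoupling, hp, hp', min_eq_left, min_eq_right] <;> linarith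

lemma sum_monotoneCoupling_self_mul (p : ℝ) (C : Bool → Bool → ℝ) :
    ∑ a, ∑ b, monotoneCoupling p p a b * C a b = ∑ a, bernoulliWeight p a * C a a := by
  simp [monotoneCoupling, bernoulliWeight]

lemma sum_monotoneCoupling_mul (p q : ℝ) (C : Bool → Bool → ℝ) :
    ∑ a, ∑ b, monotoneCoupling p q a b * C a b
      = ∑ a, bernoulliWeight p a * ∑ b, bernoulliWeight q b * C a b
        + (min p q - p * q) * ((C true true - C true false) - (C false true - C false false)) := by
  have hmax : max p q = p + q - min p q := by linarith [min_add_max p q]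
  simp only [Fintype.sum_bool, monotoneCoupling, bernoulliWeight, if_true, Bool.false_eq_true,
    if_false, hmax]
  ring

lemma min_sub_mul_mem_Icc (hp : p ∈ Set.Icc (0 : ℝ) 1) (hq : q ∈ Set.Icc (0 : ℝ) 1) :
    min p q - p * q ∈ Set.Icc 0 (q * (1 - q)) := by
  obtain ⟨hp₀, hp₁⟩ := hp
  obtain ⟨hq₀, hq₁⟩ := hq
  rcases le_total p q with h | h
  · rw [min_eq_left h]
    constructor <;> nlinarith
  · rw [min_eq_right h]
    constructor <;> nlinarith

end Coupling

/-- A binary decision tree: a `node e T` queries the coordinate `e` and continues with `T b` if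
the answer is `b`. -/
inductive QueryTree (ι : Type*)
  | leaf : QueryTree ι
  | node (e : ι) (T : Bool → QueryTree ι) : QueryTree ι

/-- Along every branch, `T` queries each coordinate outside `F` exactly once and no coordinate
of `F`. -/
def QueryTree.Exhausts {ι : Type*} [Fintype ι] [DecidableEq ι] :
    QueryTree ι → Finset ι → Prop
  | .leaf, F => F = Finset.univ
  | .node e T, F => e ∉ F ∧ ∀ b, (T b).Exhausts (insert e F)

/-- The expectation of `H X Y` when `X` and `Y` extend `ξ` and `η` from `F` to all coordinates, in
the order in which the tree `T` queries `X`: a queried coordinate of either configuration is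
sampled from the kernel `Q` given its own past, both using the same uniform variable. -/
noncomputable def coupledExp {ι : Type*} [DecidableEq ι] (Q : Finset ι → ι → (ι → Bool) → ℝ)
    (H : (ι → Bool) → (ι → Bool) → ℝ) :
    QueryTree ι → Finset ι → (ι → Bool) → (ι → Bool) → ℝ
  | .leaf, _, ξ, η => H ξ η
  | .node e T, F, ξ, η => ∑ a, ∑ b, monotoneCoupling (Q F e ξ) (Q F e η) a b *
      coupledExp Q H (T a) (insert e F) (update ξ e a) (update η e b)

section CoupledExp

variable {ι : Type*} [DecidableEq ι] {Q : Finset ι → ι → (ι → Bool) → ℝ}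

lemma coupledExp_sub (Q : Finset ι → ι → (ι → Bool) → ℝ) (H K : (ι → Bool) → (ι → Bool) → ℝ)
    (T : QueryTree ι) (F : Finset ι) (ξ η : ι → Bool) :
    coupledExp Q (fun x y => H x y - K x y) T F ξ η
      = coupledExp Q H T F ξ η - coupledExp Q K T F ξ η := by
  induction T generalizing F ξ η with
  | leaf => rfl
  | node e T ih => simp only [coupledExp, ih, mul_sub, Finset.sum_sub_distrib]

variable [Fintype ι] {T : QueryTree ι} {F : Finset ι} {w : (ι → Bool) → ℝ}

lemma QueryTree.Exhausts.coupledExp_mul_right_of_eqOn {g f : (ι → Bool) → ℝ} {c : ℝ}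
    (hT : T.Exhausts F) {ξ : ι → Bool} (hg : ∀ x, agreesOn F ξ x → g x = c) (η : ι → Bool) :
    coupledExp Q (fun x y => g x * f y) T F ξ η = c * coupledExp Q (fun _ y => f y) T F ξ η := by
  induction T generalizing F ξ η with
  | leaf => exact congrArg (· * f η) (hg ξ fun _ _ => rfl)
  | node e T ih =>
    have hg_update : ∀ a x, agreesOn (insert e F) (update ξ e a) x → g x = c := fun a x hx =>
      hg x ((agreesOn_insert_update hT.1 ξ x a).1 hx).2
    simp only [coupledExp, ih _ (hT.2 _) (hg_update _), Finset.mul_sum, mul_left_comm]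

lemma monotone_coupledExp (hQ : IsMonotoneKernel w Q) {H : (ι → Bool) → (ι → Bool) → ℝ}
    (hH : ∀ x, Monotone (H x)) (T : QueryTree ι) (F : Finset ι) (ξ : ι → Bool) :
    Monotone (coupledExp Q H T F ξ) := by
  induction T generalizing F ξ with
  | leaf => exact hH ξ
  | node e T ih =>
    have hnonneg := fun η => monotoneCoupling_nonneg (hQ.mem_Icc F e ξ) (hQ.mem_Icc F e η)
    have hbranch : ∀ a, Monotone fun η => ∑ b, monotoneCoupling (Q F e ξ) (Q F e η) a b *
        coupledExp Q H (T a) (insert e F) (update ξ e a) (update η e b) := fun a => by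
      simp only [Fintype.sum_bool, monotoneCoupling_false_right]
      refine monotone_mix_update ((monotone_monotoneCoupling_true _ a).comp (hQ.monotone F e))
        (fun η => ⟨hnonneg η a true, ?_⟩) (ih a _ _) e
      exact sub_nonneg.1 (monotoneCoupling_false_right _ _ a ▸ hnonneg η a false)
    exact fun η η' h => Finset.sum_le_sum fun a _ => hbranch a h

lemma dependsOn_coupledExp (hQ : IsMonotoneKernel w Q) (H : (ι → Bool) → (ι → Bool) → ℝ)
    (hT : T.Exhausts F) (ξ : ι → Bool) : DependsOn (coupledExp Q H T F ξ) F := by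
  induction T generalizing F ξ with
  | leaf =>
    obtain rfl : F = Finset.univ := hT
    exact dependsOn_coe_univ (H ξ)
  | node e T ih =>
    intro η η' h
    have hupdate := fun a b => dependsOn_comp_update_of_insert (ih a (hT.2 a) (update ξ e a)) b h
    simp only [coupledExp, (hQ.isCondExpOn F e).dependsOn h, hupdate]

lemma coupledExp_diag_mul_wProb (hQ : IsMonotoneKernel w Q)
    (H : (ι → Bool) → (ι → Bool) → ℝ) (hT : T.Exhausts F) (ξ : ι → Bool) :
    coupledExp Q H T F ξ ξ * wProb w (agreesOn F ξ) = cylExp w F ξ (fun ω => H ω ω) := by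
  induction T generalizing F ξ with
  | leaf =>
    obtain rfl : F = Finset.univ := hT
    exact (cylExp_of_dependsOn w (dependsOn_coe_univ fun ω => H ω ω) ξ).symm
  | node e T ih =>
    rw [coupledExp, sum_monotoneCoupling_self_mul, Finset.sum_mul,
      cylExp_eq_sum_insert_update w hT.1]
    refine Finset.sum_congr rfl fun a _ => ?_
    rw [← ih a (hT.2 a), hQ.wProb_insert_update hT.1]
    ring

lemma isCondExpOn_coupledExp_right (hQ : IsMonotoneKernel w Q) (f : (ι → Bool) → ℝ)
    (hT : T.Exhausts F) (ξ : ι → Bool) :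
    IsCondExpOn w F f (coupledExp Q (fun _ y => f y) T F ξ) := by
  induction T generalizing F ξ with
  | leaf =>
    obtain rfl : F = Finset.univ := hT
    exact isCondExpOn_self (dependsOn_coe_univ f)
  | node e T ih =>
    refine ⟨dependsOn_coupledExp hQ _ hT ξ, fun η => ?_⟩
    let M a := coupledExp Q (fun _ y => f y) (T a) (insert e F) (update ξ e a)
    let c := monotoneCoupling (Q F e ξ) (Q F e η)
    have hM : ∀ a, IsCondExpOn w (insert e F) f (M a) := fun a => ih a (hT.2 a) _
    calc coupledExp Q (fun _ y => f y) (.node e T) F ξ η * wProb w (agreesOn F η)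
        = ∑ b, ∑ a, c a b * M a (update η e b) * wProb w (agreesOn F η) := by
          simp only [coupledExp, Finset.sum_mul]
          exact Finset.sum_comm
      _ = ∑ b, ∑ a, c a b * M true (update η e b) * wProb w (agreesOn F η) :=
          Finset.sum_congr rfl fun b _ => Finset.sum_congr rfl fun a _ =>
            hQ.mul_mul_wProb_eq_of_isCondExpOn hT.1 (hM a) (hM true) η
              (monotoneCoupling_mem_Icc (hQ.mem_Icc F e ξ) (hQ.mem_Icc F e η) a b)
      _ = resample (Q F e) e (M true) η * wProb w (agreesOn F η) := by
          simp only [resample, Finset.sum_mul, ← sum_monotoneCoupling_left (Q F e ξ), c]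
      _ = cylExp w F η f := (hQ.isCondExpOn_resample hT.1 (hM true)).mul_wProb η

end CoupledExp

section Revealment

variable {ι β : Type*}

/-- The values of `ω` on `F` determine the value `f ω`. -/
def DeterminedOn (f : (ι → Bool) → β) (F : Finset ι) (ω : ι → Bool) : Prop :=
  ∀ x, agreesOn F ω x → f x = f ω

lemma DeterminedOn.mono {f : (ι → Bool) → β} {F G : Finset ι} {ω : ι → Bool}
    (h : DeterminedOn f F ω) (hFG : F ⊆ G) : DeterminedOn f G ω :=
  fun x hx => h x fun i hi => hx i (hFG hi)

lemma determinedOn_iff_of_agreesOn (f : (ι → Bool) → β) {F : Finset ι} {ξ ω : ι → Bool}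
    (h : agreesOn F ξ ω) : DeterminedOn f F ω ↔ DeterminedOn f F ξ := by
  have hiff : ∀ x, agreesOn F ω x ↔ agreesOn F ξ x := fun x =>
    forall₂_congr fun i hi => by rw [h i hi]
  constructor
  · intro hω x hx
    rw [hω x ((hiff x).2 hx), hω ξ ((hiff ξ).2 fun _ _ => rfl)]
  · intro hξ x hx
    rw [hξ x ((hiff x).1 hx), hξ ω h]

lemma determinedOn_univ [Fintype ι] (f : (ι → Bool) → β) (ω : ι → Bool) :
    DeterminedOn f Finset.univ ω :=
  fun _ hx => congrArg f (funext fun i => hx i (Finset.mem_univ i))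

/-- The sum of the costs `c e` of the queries made on input `ω` by the tree `T`, starting with the
coordinates in `F` revealed, until the revealed values determine `f`. -/
noncomputable def costUntilDetermined [DecidableEq ι] (f : (ι → Bool) → β) (c : ι → ℝ) :
    QueryTree ι → Finset ι → (ι → Bool) → ℝ
  | .leaf, _, _ => 0
  | .node e T, F, ω => if DeterminedOn f F ω then 0
      else c e + costUntilDetermined f c (T (ω e)) (insert e F) ω

lemma costUntilDetermined_of_determinedOn [DecidableEq ι] {f : (ι → Bool) → β} (c : ι → ℝ)
    (T : QueryTree ι) {F : Finset ι} {ω : ι → Bool} (h : DeterminedOn f F ω) :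
    costUntilDetermined f c T F ω = 0 := by
  cases T with
  | leaf => rfl
  | node e T => exact if_pos h

variable [Fintype ι] [DecidableEq ι] {Q : Finset ι → ι → (ι → Bool) → ℝ} {w : (ι → Bool) → ℝ}
  {F : Finset ι} {f g : (ι → Bool) → ℝ}

lemma coupledExp_node_le (hQ : IsMonotoneKernel w Q) (hf : Monotone f)
    (hg : ∀ x, g x ∈ Set.Icc (0 : ℝ) 1) (e : ι) (T : Bool → QueryTree ι) (ξ η : ι → Bool) :
    coupledExp Q (fun x y => g x * f y) (.node e T) F ξ η ≤
      ∑ a, bernoulliWeight (Q F e ξ) a * resample (Q F e) e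
          (coupledExp Q (fun x y => g x * f y) (T a) (insert e F) (update ξ e a)) η +
        Q F e η * (1 - Q F e η) *
          (coupledExp Q (fun _ y => f y) (T true) (insert e F) (update ξ e true) (update η e true) -
            coupledExp Q (fun _ y => f y) (T true) (insert e F) (update ξ e true)
              (update η e false)) := by
  let C a := coupledExp Q (fun x y => g x * f y) (T a) (insert e F) (update ξ e a)
  let M := coupledExp Q (fun _ y => f y) (T true) (insert e F) (update ξ e true)
  have hC_flip : 0 ≤ C false (update η e true) - C false (update η e false) :=
    sub_nonneg.2 (le_update_true_of_monotone
      (monotone_coupledExp hQ (fun x => hf.const_mul (hg x).1) _ _ _) e η)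
  have hMC_mono : Monotone fun η => M η - C true η := by
    simp only [M, C, ← coupledExp_sub]
    refine monotone_coupledExp hQ (fun x => ?_) _ _ _
    simpa only [sub_mul, one_mul] using hf.const_mul (sub_nonneg.2 (hg x).2)
  have hMC_flip := le_update_true_of_monotone hMC_mono e η
  have hM_flip : 0 ≤ M (update η e true) - M (update η e false) :=
    sub_nonneg.2 (le_update_true_of_monotone (monotone_coupledExp hQ (fun _ => hf) _ _ _) e η)
  have hκ := min_sub_mul_mem_Icc (hQ.mem_Icc F e ξ) (hQ.mem_Icc F e η)
  rw [coupledExp, sum_monotoneCoupling_mul]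
  refine add_le_add_right ?_ _
  calc (min (Q F e ξ) (Q F e η) - Q F e ξ * Q F e η) *
          (C true (update η e true) - C true (update η e false) -
            (C false (update η e true) - C false (update η e false)))
      ≤ (min (Q F e ξ) (Q F e η) - Q F e ξ * Q F e η) *
          (M (update η e true) - M (update η e false)) :=
        mul_le_mul_of_nonneg_left (by linarith) hκ.1
    _ ≤ Q F e η * (1 - Q F e η) * (M (update η e true) - M (update η e false)) :=
        mul_le_mul_of_nonneg_right hκ.2 hM_flip

lemma wExp_coupledExp_node_le (hQ : IsMonotoneKernel w Q) (hw : IsProbWeight w)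
    (hf : Monotone f) (hg : ∀ x, g x ∈ Set.Icc (0 : ℝ) 1) {e : ι} {T : Bool → QueryTree ι}
    (hT : (QueryTree.node e T).Exhausts F) (ξ : ι → Bool) :
    wExp w (coupledExp Q (fun x y => g x * f y) (.node e T) F ξ) ≤
      ∑ a, bernoulliWeight (Q F e ξ) a *
          wExp w (coupledExp Q (fun x y => g x * f y) (T a) (insert e F) (update ξ e a)) +
        wCov w f (coordFun e) := by
  refine (wExp_mono hw.1 (coupledExp_node_le hQ hf hg e T ξ)).trans ?_
  rw [wExp_add, wExp_sum]
  refine add_le_add (Finset.sum_le_sum fun a _ => ?_)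
    (hQ.wExp_condCov_le_wCov hw hT.1 hf (isCondExpOn_coupledExp_right hQ f (hT.2 true) _))
  rw [wExp_const_mul, hQ.wExp_resample hT.1 (dependsOn_coupledExp hQ _ (hT.2 a) _)]

lemma wProb_mul_wExp_coupledExp_of_determinedOn (hQ : IsMonotoneKernel w Q)
    (f : (ι → Bool) → ℝ) {T : QueryTree ι} (hT : T.Exhausts F) {ξ : ι → Bool}
    (hξ : DeterminedOn g F ξ) (c : ι → ℝ) :
    wProb w (agreesOn F ξ) * wExp w (coupledExp Q (fun x y => g x * f y) T F ξ)
      = cylExp w F ξ (fun ω => costUntilDetermined g c T F ω + wExp w f * g ω) := by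
  have hcoupled : wExp w (coupledExp Q (fun x y => g x * f y) T F ξ) = g ξ * wExp w f := by
    rw [funext (hT.coupledExp_mul_right_of_eqOn hξ), wExp_const_mul,
      (isCondExpOn_coupledExp_right hQ f hT ξ).wExp_eq]
  have hcost : ∀ ω, agreesOn F ξ ω →
      costUntilDetermined g c T F ω + wExp w f * g ω = wExp w f * g ξ := fun ω hω => by
    rw [costUntilDetermined_of_determinedOn c T ((determinedOn_iff_of_agreesOn g hω).2 hξ),
      hξ ω hω, zero_add]
  rw [hcoupled, cylExp_congr w hcost, cylExp_const]
  ring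

lemma cylExp_costUntilDetermined_node (w : (ι → Bool) → ℝ) {g : (ι → Bool) → β}
    {e : ι} (he : e ∉ F) {ξ : ι → Bool} (hξ : ¬DeterminedOn g F ξ) (c : ι → ℝ)
    (T : Bool → QueryTree ι) (G : (ι → Bool) → ℝ) :
    cylExp w F ξ (fun ω => costUntilDetermined g c (.node e T) F ω + G ω) =
      ∑ a, cylExp w (insert e F) (update ξ e a)
          (fun ω => costUntilDetermined g c (T a) (insert e F) ω + G ω) +
        c e * wProb w (agreesOn F ξ) := by
  have hnode : ∀ ω, agreesOn F ξ ω → costUntilDetermined g c (.node e T) F ω + G ω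
      = costUntilDetermined g c (T (ω e)) (insert e F) ω + G ω + c e := fun ω hω => by
    rw [costUntilDetermined, if_neg (mt (determinedOn_iff_of_agreesOn g hω).1 hξ)]
    ring
  rw [cylExp_congr w hnode, cylExp_add, cylExp_const, cylExp_eq_sum_insert_update w he]
  congr 1
  refine Finset.sum_congr rfl fun a _ => cylExp_congr w fun ω hω => ?_
  rw [((agreesOn_insert_update he ξ ω a).1 hω).1]

lemma wProb_mul_wExp_coupledExp_le (hQ : IsMonotoneKernel w Q) (hw : IsProbWeight w)
    (hf : Monotone f) (hg : ∀ x, g x ∈ Set.Icc (0 : ℝ) 1) {T : QueryTree ι}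
    (hT : T.Exhausts F) (ξ : ι → Bool) :
    wProb w (agreesOn F ξ) * wExp w (coupledExp Q (fun x y => g x * f y) T F ξ)
      ≤ cylExp w F ξ (fun ω => costUntilDetermined g (fun e => wCov w f (coordFun e)) T F ω
          + wExp w f * g ω) := by
  induction T generalizing F ξ with
  | leaf =>
    have hF : F = Finset.univ := hT
    exact (wProb_mul_wExp_coupledExp_of_determinedOn hQ f hT (hF ▸ determinedOn_univ g ξ) _).le
  | node e T ih =>
    by_cases hξ : DeterminedOn g F ξ
    · exact (wProb_mul_wExp_coupledExp_of_determinedOn hQ f hT hξ _).le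
    rw [cylExp_costUntilDetermined_node w hT.1 hξ]
    let C a := coupledExp Q (fun x y => g x * f y) (T a) (insert e F) (update ξ e a)
    calc wProb w (agreesOn F ξ) * wExp w (coupledExp Q (fun x y => g x * f y) (.node e T) F ξ)
        ≤ wProb w (agreesOn F ξ) *
            (∑ a, bernoulliWeight (Q F e ξ) a * wExp w (C a) + wCov w f (coordFun e)) :=
          mul_le_mul_of_nonneg_left (wExp_coupledExp_node_le hQ hw hf hg hT ξ)
            (wProb_nonneg hw.1 _)
      _ = ∑ a, wProb w (agreesOn (insert e F) (update ξ e a)) * wExp w (C a) +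
            wCov w f (coordFun e) * wProb w (agreesOn F ξ) := by
          simp only [hQ.wProb_insert_update hT.1, mul_add, Finset.mul_sum, mul_assoc,
            mul_left_comm, mul_comm]
      _ ≤ _ := add_le_add_left (Finset.sum_le_sum fun a _ => ih a (hT.2 a) _) _

lemma wCov_le_wExp_costUntilDetermined (hQ : IsMonotoneKernel w Q) (hw : IsProbWeight w)
    (hf : Monotone f) (hg : ∀ x, g x ∈ Set.Icc (0 : ℝ) 1) {T : QueryTree ι}
    (hT : T.Exhausts ∅) :
    wCov w g f ≤ wExp w (costUntilDetermined g (fun e => wCov w f (coordFun e)) T ∅) := by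
  have hprob : wProb w (agreesOn ∅ ⊥) = 1 := by
    simpa only [cylExp_const, one_mul, hw.wExp_const] using cylExp_empty w ⊥ fun _ => 1
  have hdiag := coupledExp_diag_mul_wProb hQ (fun x y => g x * f y) hT ⊥
  have hconst : coupledExp Q (fun x y => g x * f y) T ∅ ⊥
      = fun _ => wExp w fun ω => g ω * f ω := by
    funext η
    rw [hprob, mul_one, cylExp_empty] at hdiag
    rw [← hdiag]
    exact dependsOn_coupledExp hQ _ hT ⊥ (by simp)
  have hmain := wProb_mul_wExp_coupledExp_le hQ hw hf hg hT ⊥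
  rw [hprob, one_mul, hconst, hw.wExp_const, cylExp_empty, wExp_add, wExp_const_mul] at hmain
  rw [wCov]
  linarith

end Revealment

section Algorithm

/-- The first `k` queries of the decision rule `ψ` after the history `h`, as a tree. -/
def queryTreeOf {ι : Type*} (ψ : List (ι × Bool) → ι) : ℕ → List (ι × Bool) → QueryTree ι
  | 0, _ => .leaf
  | k + 1, h => .node (ψ h) fun b => queryTreeOf ψ k (h ++ [(ψ h, b)])

lemma IsDecisionTree.injOn_algQuery {ι : Type*} [Fintype ι] {ψ : List (ι × Bool) → ι}
    (hψ : IsDecisionTree ψ) (ω : ι → Bool) :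
    Set.InjOn (algQuery ψ ω) (Set.Iio (Fintype.card ι)) := by
  intro s hs t ht hst
  by_contra hne
  rcases lt_or_gt_of_ne hne with h | h
  exacts [hψ ω s t h ht hst, hψ ω t s h hs hst.symm]

variable {ι : Type*} [DecidableEq ι] {ψ : List (ι × Bool) → ι} {ω ω' : ι → Bool} {t : ℕ}

/-- The set of the first `t` coordinates queried by the decision rule `ψ` on input `ω`. -/
def queried (ψ : List (ι × Bool) → ι) (ω : ι → Bool) (t : ℕ) : Finset ι :=
  (Finset.range t).image (algQuery ψ ω)

lemma queried_succ (ψ : List (ι × Bool) → ι) (ω : ι → Bool) (t : ℕ) :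
    queried ψ ω (t + 1) = insert (algQuery ψ ω t) (queried ψ ω t) := by
  rw [queried, Finset.range_add_one, Finset.image_insert, queried]

lemma queried_mono (ψ : List (ι × Bool) → ι) (ω : ι → Bool) : Monotone (queried ψ ω) :=
  fun _ _ h => Finset.image_subset_image (Finset.range_mono h)

lemma algHistory_eq_and_queried_eq (h : agreesOn (queried ψ ω t) ω ω') :
    algHistory ψ ω' t = algHistory ψ ω t ∧ queried ψ ω' t = queried ψ ω t := by
  induction t with
  | zero => exact ⟨rfl, rfl⟩
  | succ t ih =>
    rw [queried_succ] at h ⊢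
    obtain ⟨hhist, hqueried⟩ := ih fun i hi => h i (Finset.mem_insert_of_mem hi)
    have hvalue : ω' (ψ (algHistory ψ ω t)) = ω (ψ (algHistory ψ ω t)) :=
      h _ (Finset.mem_insert_self _ _)
    rw [queried_succ, hqueried, algHistory, algHistory, algQuery, algQuery, hhist, hvalue]
    exact ⟨rfl, rfl⟩

lemma algStoppingTime_eq_sInf (f : (ι → Bool) → Bool) (ψ : List (ι × Bool) → ι) (ω : ι → Bool) :
    algStoppingTime f ψ ω = sInf {t | 1 ≤ t ∧ DeterminedOn f (queried ψ ω t) ω} := by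
  simp only [algStoppingTime, DeterminedOn, agreesOn, queried, Finset.forall_mem_image,
    Finset.mem_range]

variable [Fintype ι]

lemma wRevealment_eq_wExp (w : (ι → Bool) → ℝ) (f : (ι → Bool) → Bool)
    (ψ : List (ι × Bool) → ι) (i : ι) :
    wRevealment w f ψ i
      = wExp w (fun ω => if i ∈ queried ψ ω (algStoppingTime f ψ ω) then 1 else 0) := by
  rw [← wProb_eq_wExp, wRevealment]
  simp only [queried, Finset.mem_image, Finset.mem_range]

namespace IsDecisionTree

lemma queried_card (hψ : IsDecisionTree ψ) (ω : ι → Bool) :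
    queried ψ ω (Fintype.card ι) = Finset.univ := by
  rw [← Finset.card_eq_iff_eq_univ, queried, Finset.card_image_of_injOn, Finset.card_range]
  simpa only [Finset.coe_range] using hψ.injOn_algQuery ω

lemma exhausts_queryTreeOf (hψ : IsDecisionTree ψ) {k : ℕ} (hk : t + k = Fintype.card ι)
    (ω : ι → Bool) : (queryTreeOf ψ k (algHistory ψ ω t)).Exhausts (queried ψ ω t) := by
  induction k generalizing t ω with
  | zero =>
    obtain rfl : t = Fintype.card ι := hk
    exact hψ.queried_card ω
  | succ k ih =>
    have hnew : algQuery ψ ω t ∉ queried ψ ω t := by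
      simp only [queried, Finset.mem_image, Finset.mem_range, not_exists, not_and]
      exact fun s hs => hψ ω s t hs (by lia)
    refine ⟨hnew, fun b => ?_⟩
    let ω' := update ω (algQuery ψ ω t) b
    have hagree : agreesOn (queried ψ ω t) ω ω' := fun i hi =>
      update_of_ne (ne_of_mem_of_not_mem hi hnew) _ _
    obtain ⟨hhist, hqueried⟩ := algHistory_eq_and_queried_eq hagree
    have hquery : algQuery ψ ω' t = algQuery ψ ω t := congrArg ψ hhist
    have hsubtree := ih (t := t + 1) (by lia) ω'
    have hvalue : ω' (ψ (algHistory ψ ω t)) = b := update_self _ _ _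
    rw [queried_succ, hqueried, hquery, algHistory, hhist, hvalue] at hsubtree
    exact hsubtree

lemma algStoppingTime_mem (hψ : IsDecisionTree ψ) (f : (ι → Bool) → Bool) (ω : ι → Bool) :
    algStoppingTime f ψ ω ≤ Fintype.card ι ∧
      DeterminedOn f (queried ψ ω (algStoppingTime f ψ ω)) ω := by
  have : Nonempty ι := ⟨ψ []⟩
  have hcard : Fintype.card ι ∈ {t | 1 ≤ t ∧ DeterminedOn f (queried ψ ω t) ω} :=
    ⟨Fintype.card_pos, hψ.queried_card ω ▸ determinedOn_univ f ω⟩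
  rw [algStoppingTime_eq_sInf]
  exact ⟨Nat.sInf_le hcard, (Nat.sInf_mem ⟨_, hcard⟩).2⟩

lemma lt_algStoppingTime (hψ : IsDecisionTree ψ) {f : (ι → Bool) → Bool}
    (h : ¬DeterminedOn f (queried ψ ω t) ω) : t < algStoppingTime f ψ ω := by
  by_contra! hle
  exact h ((hψ.algStoppingTime_mem f ω).2.mono (queried_mono ψ ω hle))

lemma costUntilDetermined_queryTreeOf_le (hψ : IsDecisionTree ψ) (g : (ι → Bool) → Bool)
    {c : ι → ℝ} (hc : 0 ≤ c) (ω : ι → Bool) (k t : ℕ) :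
    costUntilDetermined (boolInd g) c (queryTreeOf ψ k (algHistory ψ ω t)) (queried ψ ω t) ω
      ≤ ∑ s ∈ Finset.Ico t (algStoppingTime g ψ ω), c (algQuery ψ ω s) := by
  have hsum_nonneg : ∀ t, 0 ≤ ∑ s ∈ Finset.Ico t (algStoppingTime g ψ ω), c (algQuery ψ ω s) :=
    fun t => Finset.sum_nonneg fun s _ => hc _
  induction k generalizing t with
  | zero => exact hsum_nonneg t
  | succ k ih =>
    rw [queryTreeOf, costUntilDetermined]
    split_ifs with hdet
    · exact hsum_nonneg t
    · have hlt : t < algStoppingTime g ψ ω :=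
        hψ.lt_algStoppingTime fun h => hdet fun x hx => by rw [boolInd, h x hx, boolInd]
      rw [Finset.sum_eq_sum_Ico_succ_bot hlt]
      have hnext := ih (t + 1)
      rw [queried_succ] at hnext
      exact add_le_add_right hnext _

lemma wExp_costUntilDetermined_le {w : (ι → Bool) → ℝ} (hψ : IsDecisionTree ψ) (hw : 0 ≤ w)
    (g : (ι → Bool) → Bool) {c : ι → ℝ} (hc : 0 ≤ c) :
    wExp w (costUntilDetermined (boolInd g) c (queryTreeOf ψ (Fintype.card ι) []) ∅)
      ≤ ∑ i, wRevealment w g ψ i * c i := by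
  have hsum : ∀ ω, ∑ s ∈ Finset.range (algStoppingTime g ψ ω), c (algQuery ψ ω s)
      = ∑ i, c i * if i ∈ queried ψ ω (algStoppingTime g ψ ω) then 1 else 0 := by
    intro ω
    have hinj : Set.InjOn (algQuery ψ ω) (Finset.range (algStoppingTime g ψ ω)) :=
      (hψ.injOn_algQuery ω).mono fun s hs =>
        (Finset.mem_range.1 hs).trans_le (hψ.algStoppingTime_mem g ω).1
    rw [← Finset.sum_image hinj]
    simp only [mul_boole, Finset.sum_ite_mem, Finset.univ_inter]
    rfl
  calc wExp w (costUntilDetermined (boolInd g) c (queryTreeOf ψ (Fintype.card ι) []) ∅)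
      ≤ wExp w (fun ω => ∑ s ∈ Finset.range (algStoppingTime g ψ ω), c (algQuery ψ ω s)) :=
        wExp_mono hw fun ω =>
          (hψ.costUntilDetermined_queryTreeOf_le g hc ω (Fintype.card ι) 0).trans_eq
            (by rw [Finset.range_eq_Ico])
    _ = ∑ i, wRevealment w g ψ i * c i := by
        simp only [hsum, wExp_sum, wExp_const_mul, wRevealment_eq_wExp, mul_comm]

end IsDecisionTree

end Algorithm

section Influence

variable {ι : Type*} [Fintype ι] [DecidableEq ι] {w : (ι → Bool) → ℝ}

lemma IsProbWeight.wCov_coordFun_eq (hw : IsProbWeight w) (f : (ι → Bool) → Bool) {i : ι}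
    (hi : 0 < wProb w (fun ω => ω i = true) ∧ wProb w (fun ω => ω i = true) < 1) :
    wCov w (boolInd f) (coordFun i) = wProb w (fun ω => ω i = true) *
      (1 - wProb w (fun ω => ω i = true)) * condInfluence w f i := by
  set p := wProb w (fun ω => ω i = true) with hp
  set a := wProb w (fun ω => f ω = true ∧ ω i = true) with ha
  set b := wProb w (fun ω => f ω = true ∧ ω i = false) with hb
  have hcoord : wExp w (coordFun i) = p := (wProb_eq_wExp w _).symm
  have hfalse : wProb w (fun ω => ω i = false) = 1 - p := by
    rw [eq_sub_iff_add_eq, ← hw.wExp_const 1, wProb_eq_wExp, ← hcoord, ← wExp_add]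
    congr 1 with ω
    cases hωi : ω i <;> simp [coordFun, hωi]
  have hf : wExp w (boolInd f) = a + b := by
    rw [ha, hb, wProb_eq_wExp, wProb_eq_wExp, ← wExp_add]
    congr 1 with ω
    cases ω i <;> simp [boolInd]
  have hprod : wExp w (fun ω => boolInd f ω * coordFun i ω) = a := by
    rw [ha, wProb_eq_wExp]
    congr 1 with ω
    simp only [boolInd, coordFun, ite_and, ite_mul, one_mul, zero_mul]
  have hp₀ : p ≠ 0 := hi.1.ne'
  have hp₁ : 1 - p ≠ 0 := (sub_pos.2 hi.2).ne'
  rw [wCov, hprod, hf, hcoord, condInfluence, hfalse, ← ha, ← hb, ← hp]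
  field_simp
  ring

lemma IsMonotonic.wCov_coordFun_le_condInfluence (hm : IsMonotonic w) (hw : IsProbWeight w)
    {f : (ι → Bool) → Bool} (hf : IncreasingBoolFun f) {i : ι}
    (hi : 0 < wProb w (fun ω => ω i = true) ∧ wProb w (fun ω => ω i = true) < 1) :
    wCov w (boolInd f) (coordFun i) ≤ condInfluence w f i := by
  obtain ⟨Q, hQ⟩ := hm.exists_isMonotoneKernel hw.1
  have hcov := hQ.wCov_nonneg hw hf.monotone_boolInd (coordFun_monotone i)
  rw [hw.wCov_coordFun_eq f hi] at hcov ⊢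
  set p := wProb w (fun ω => ω i = true)
  have hvar : 0 < p * (1 - p) := mul_pos hi.1 (sub_pos.2 hi.2)
  have hvar_le : p * (1 - p) ≤ 1 := by nlinarith
  exact mul_le_of_le_one_left (nonneg_of_mul_nonneg_right hcov hvar) hvar_le

end Influence

theorem osss_inequality_monotonic_general {ι : Type*} [Fintype ι] [DecidableEq ι]
    {w : (ι → Bool) → ℝ} (hw : IsProbWeight w) (hmono : IsMonotonic w)
    {f : (ι → Bool) → ℝ} (hf : Monotone f) (g : (ι → Bool) → Bool)
    {ψ : List (ι × Bool) → ι} (hψ : IsDecisionTree ψ) :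
    wCov w (boolInd g) f ≤ ∑ i, wRevealment w g ψ i * wCov w f (coordFun i) := by
  obtain ⟨Q, hQ⟩ := hmono.exists_isMonotoneKernel hw.1
  have hcov_nonneg : 0 ≤ fun i => wCov w f (coordFun i) := fun i =>
    hQ.wCov_nonneg hw hf (coordFun_monotone i)
  have hexhausts : (queryTreeOf ψ (Fintype.card ι) []).Exhausts ∅ :=
    hψ.exhausts_queryTreeOf (zero_add _) ⊥
  exact (wCov_le_wExp_costUntilDetermined hQ hw hf (boolInd_mem_Icc g) hexhausts).trans
    (hψ.wExp_costUntilDetermined_le hw.1 g hcov_nonneg)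

/-- **OSSS inequality for monotonic measures** (Duminil-Copin–Raoufi–Tassion).  For any
monotonic probability measure `μ` on `{0,1}^n` with `0 < μ[ω_i = 1] < 1` for every `i`,
any increasing boolean function `f` and any decision tree `T` (given by its decision
rule `ψ`), `Var_μ(f) ≤ Σ_i δ_i(T)·Inf_i^μ(f)`. -/
theorem osss_inequality_monotonic (n : ℕ) (w : (Fin n → Bool) → ℝ)
    (hw : IsProbWeight w) (hmono : IsMonotonic w)
    (hnd : ∀ i : Fin n, 0 < wProb w (fun ω => ω i = true) ∧
      wProb w (fun ω => ω i = true) < 1)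
    (f : (Fin n → Bool) → Bool) (hf : IncreasingBoolFun f)
    (ψ : List (Fin n × Bool) → Fin n) (hψ : IsDecisionTree ψ) :
    wVar w (boolInd f) ≤ ∑ i : Fin n, wRevealment w f ψ i * condInfluence w f i := by
  rw [hw.wVar_eq_wCov_self]
  exact (osss_inequality_monotonic_general hw hmono hf.monotone_boolInd f hψ).trans
    (Finset.sum_le_sum fun i _ => mul_le_mul_of_nonneg_left
      (hmono.wCov_coordFun_le_condInfluence hw hf (hnd i)) (wProb_nonneg hw.1 _))
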